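/- Let n ≥ 2 and let T = {1,…,n} or T = {1,…,n−1}. Then all of the following hold: (i) the top row (p_{n,0}^{∅⊆T∖{1}}, p_{n,1}^{∅⊆T∖{1}}, …, p_{n,n}^{∅⊆T∖{1}}) is an interlacing sequence; (ii) the middle row (p_{n,0}^{∅⊆T}, p_{n,1}^{∅⊆T}, …, p_{n,n}^{∅⊆T}) is an interlacing sequence; (iii) the bottom row (p_{n,0}^{{1}⊆T}, p_{n,1}^{{1}⊆T}, …, p_{n,n}^{{1}⊆T}) is an interlacing sequence; (iv) for every 0 ≤ k ≤ n, the column (p_{n,k}^{∅⊆T∖{1}}, p_{n,k}^{∅⊆T}, p_{n,k}^{{1}⊆T}) is an interlacing sequence; and (v) p_{n,n−1}^{∅⊆T∖{1}} ⪯ p_{n,1}^{{1}⊆T}, so that the concatenated sequence (p_{n,0}^{∅⊆T∖{1}}, …, p_{n,n−1}^{∅⊆T∖{1}}, p_{n,1}^{{1}⊆T}, …, p_{n,n}^{{1}⊆T}) is an interlacing sequence. -/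

import Mathlib

open Polynomial

noncomputable section

/-- A real polynomial is *real-rooted* if all of its complex roots are real.
(The zero polynomial is real-rooted by convention.) -/
def RealRooted (f : Polynomial ℝ) : Prop :=
  ∀ z ∈ (f.map (algebraMap ℝ ℂ)).roots, z.im = 0

/-- All coefficients of the polynomial are nonnegative. -/
def NonnegCoeffs (f : Polynomial ℝ) : Prop := ∀ i, 0 ≤ f.coeff i

/-- The list of real roots of `f`, with multiplicity, in weakly decreasing order. -/
def descRoots (f : Polynomial ℝ) : List ℝ := (f.roots.sort (· ≤ ·)).reverse

/-- The interlacing condition on the weakly decreasing root sequences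
`α` of `f` and `β` of `g` : `β₁ ≥ α₁ ≥ β₂ ≥ α₂ ≥ …`, together with the
degree condition `deg g ∈ {deg f, deg f + 1}`. -/
def InterlacesAux (f g : Polynomial ℝ) : Prop :=
  (g.natDegree = f.natDegree ∨ g.natDegree = f.natDegree + 1) ∧
  (∀ (i : ℕ) (hf : i < (descRoots f).length) (hg : i < (descRoots g).length),
      (descRoots f).get ⟨i, hf⟩ ≤ (descRoots g).get ⟨i, hg⟩) ∧
  (∀ (i : ℕ) (hf : i < (descRoots f).length) (hg : i + 1 < (descRoots g).length),
      (descRoots g).get ⟨i + 1, hg⟩ ≤ (descRoots f).get ⟨i, hf⟩)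

/-- `f ⪯ g` : `f` interlaces `g`.  Both polynomials are required to be real-rooted;
by convention `0 ⪯ 0`, `0 ⪯ f`, `f ⪯ 0`, and any two polynomials of degree at most 1
interlace. -/
def Interlaces (f g : Polynomial ℝ) : Prop :=
  RealRooted f ∧ RealRooted g ∧
  (f = 0 ∨ g = 0 ∨ (f.natDegree ≤ 1 ∧ g.natDegree ≤ 1) ∨ InterlacesAux f g)

/-- A finite family of real-rooted polynomials is an interlacing sequence if
`F i ⪯ F j` for all `i < j`. -/
def InterlacingSeq {n : ℕ} (F : Fin n → Polynomial ℝ) : Prop :=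
  ∀ i j : Fin n, i < j → Interlaces (F i) (F j)

/-- A polynomial of degree `d` is palindromic if `coeff i = coeff (d - i)` for all `i ≤ d`. -/
def Palindromic (f : Polynomial ℝ) : Prop :=
  ∀ i ≤ f.natDegree, f.coeff i = f.coeff (f.natDegree - i)

/-- A set `S ⊆ ℕ` is isolated if `i ∈ S` implies `i + 1 ∉ S`. -/
def IsolatedSet (S : Finset ℕ) : Prop := ∀ i ∈ S, i + 1 ∉ S

instance : DecidablePred IsolatedSet := fun S =>
  decidable_of_iff (∀ i ∈ S, i + 1 ∉ S) Iff.rfl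

/-- The descent set of a permutation `w` of `{1, …, n+1}` (encoded as a permutation of
`Fin (n+1)`), as a subset of `{1, …, n}` : `Des(w) = {i ∈ {1,…,n} : w(i) > w(i+1)}`. -/
def desSet {n : ℕ} (w : Equiv.Perm (Fin (n + 1))) : Finset ℕ :=
  (Finset.univ.filter (fun i : Fin n => w i.succ < w i.castSucc)).image
    (fun i => i.val + 1)

/-- The polynomial `p_{n,k}^{S ⊆ T}(x) = Σ x^{des(w)}`, the sum over all permutations `w`
of `{1, …, n+1}` with `w(1) = k + 1`, `Des(w)` isolated and `S ⊆ Des(w) ⊆ T`. -/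
def pPoly (n k : ℕ) (S T : Finset ℕ) : Polynomial ℝ :=
  ∑ w ∈ Finset.univ.filter (fun w : Equiv.Perm (Fin (n + 1)) =>
      (w 0 : ℕ) = k ∧ IsolatedSet (desSet w) ∧ S ⊆ desSet w ∧ desSet w ⊆ T),
    Polynomial.X ^ (desSet w).card

/-- The shifted set `S - 1 = {i - 1 : i ∈ S} ∩ {1, …, n-1}`. -/
def shiftDown (n : ℕ) (S : Finset ℕ) : Finset ℕ :=
  (S.image (fun i => i - 1)) ∩ Finset.Icc 1 (n - 1)

section Poset

variable (P : Type*) [Fintype P] [PartialOrder P] [OrderBot P]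

/-- A finite poset `P` with a minimum is simplicial of rank `n` if for every maximal
element `m` the interval `[⊥, m]` is order-isomorphic to the boolean lattice of
subsets of an `n`-element set. -/
def SimplicialOfRank (n : ℕ) : Prop :=
  ∀ m : P, IsMax m → Nonempty ((Set.Icc (⊥ : P) m) ≃o Finset (Fin n))

variable {P}

/-- `rk` is a rank function: `rk ⊥ = 0` and ranks increase by one along covers. -/
def IsRankFunction (rk : P → ℕ) : Prop :=
  rk ⊥ = 0 ∧ ∀ a b : P, a ⋖ b → rk b = rk a + 1

/-- `f_{i-1}` : the number of elements of `P` of rank `i`. -/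
def fvec (rk : P → ℕ) (i : ℕ) : ℕ := (Finset.univ.filter (fun x => rk x = i)).card

/-- The generating polynomial `Σ_{i=0}^n h_i x^i = Σ_{i=0}^n f_{i-1} x^i (1-x)^{n-i}`
of the h-vector of `P`. -/
def hPoly (rk : P → ℕ) (n : ℕ) : Polynomial ℤ :=
  ∑ i ∈ Finset.range (n + 1),
    Polynomial.C (fvec rk i : ℤ) * Polynomial.X ^ i * (1 - Polynomial.X) ^ (n - i)

/-- The h-vector entry `h_k` of `P`. -/
def hvec (rk : P → ℕ) (n k : ℕ) : ℤ := (hPoly rk n).coeff k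

/-- The flag f-vector `α_{P̂}(T)` : the number of chains in `P̂ ∖ {0̂, 1̂} = P ∖ {⊥}`
whose set of ranks is exactly `T`. -/
def flagF (rk : P → ℕ) (T : Finset ℕ) : ℕ :=
  Nat.card {c : Finset P // IsChain (· ≤ ·) (c : Set P) ∧ (⊥ : P) ∉ c ∧ c.image rk = T}

/-- The flag h-vector `β_{P̂}(S) = Σ_{T ⊆ S} (-1)^{|S ∖ T|} α_{P̂}(T)`. -/
def flagH (rk : P → ℕ) (S : Finset ℕ) : ℤ :=
  ∑ T ∈ S.powerset, (-1) ^ ((S \ T).card) * (flagF rk T : ℤ)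

/-- The flag h-vector of the dual poset `P̂*` : `β_{P̂*}(S) = β_{P̂}({n+1-s : s ∈ S})`. -/
def flagHDual (rk : P → ℕ) (n : ℕ) (S : Finset ℕ) : ℤ :=
  flagH rk (S.image (fun s => n + 1 - s))

/-- The Chow polynomial
`H_{P̂}(x) = Σ_{S ⊆ {2,…,n} isolated} β_{P̂}(S) x^{|S|} (1+x)^{n-2|S|}`. -/
def chowPoly (rk : P → ℕ) (n : ℕ) : Polynomial ℝ :=
  ∑ S ∈ (Finset.Icc 2 n).powerset.filter IsolatedSet,
    (flagH rk S : ℝ) • (Polynomial.X ^ S.card * (1 + Polynomial.X) ^ (n - 2 * S.card))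

/-- The augmented Chow polynomial
`H^aug_{P̂}(x) = Σ_{S ⊆ {1,…,n} isolated} β_{P̂}(S) x^{|S|} (1+x)^{n+1-2|S|}`. -/
def chowAugPoly (rk : P → ℕ) (n : ℕ) : Polynomial ℝ :=
  ∑ S ∈ (Finset.Icc 1 n).powerset.filter IsolatedSet,
    (flagH rk S : ℝ) • (Polynomial.X ^ S.card * (1 + Polynomial.X) ^ (n + 1 - 2 * S.card))

/-- The Chow polynomial of the dual poset `P̂*`. -/
def chowDualPoly (rk : P → ℕ) (n : ℕ) : Polynomial ℝ :=
  ∑ S ∈ (Finset.Icc 2 n).powerset.filter IsolatedSet,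
    (flagHDual rk n S : ℝ) • (Polynomial.X ^ S.card * (1 + Polynomial.X) ^ (n - 2 * S.card))

/-- The augmented Chow polynomial of the dual poset `P̂*`. -/
def chowAugDualPoly (rk : P → ℕ) (n : ℕ) : Polynomial ℝ :=
  ∑ S ∈ (Finset.Icc 1 n).powerset.filter IsolatedSet,
    (flagHDual rk n S : ℝ) • (Polynomial.X ^ S.card * (1 + Polynomial.X) ^ (n + 1 - 2 * S.card))

end Poset

end


def RI (f g : ℝ[X]) : Prop := ∀ z : ℂ, 0 < z.im →
  0 ≤ (aeval z g * (starRingEnd ℂ) (aeval z f)).im ∧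
  0 ≤ (z * aeval z f * (starRingEnd ℂ) (aeval z g)).im

def StableP (f : ℝ[X]) : Prop := f = 0 ∨ ∀ z : ℂ, 0 < z.im → aeval z f ≠ 0

lemma RI.zero_left (f : ℝ[X]) : RI 0 f := fun z _ => by simp
lemma RI.zero_right (f : ℝ[X]) : RI f 0 := fun z _ => by simp
lemma RI.refl (f : ℝ[X]) : RI f f := fun z hz => by
  refine ⟨by rw [Complex.mul_conj]; simp, ?_⟩
  rw [mul_assoc, Complex.mul_conj, mul_comm, Complex.im_ofReal_mul]
  exact mul_nonneg (Complex.normSq_nonneg _) hz.le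
lemma RI.add_left {f g h : ℝ[X]} (h1 : RI f h) (h2 : RI g h) : RI (f + g) h := fun z hz => by
  have a := h1 z hz
  have b := h2 z hz
  constructor
  · rw [map_add, map_add, mul_add, Complex.add_im]
    exact add_nonneg a.1 b.1
  · rw [map_add, mul_add, add_mul, Complex.add_im]
    exact add_nonneg a.2 b.2
lemma RI.add_right {f g h : ℝ[X]} (h1 : RI h f) (h2 : RI h g) : RI h (f + g) := fun z hz => by
  have a := h1 z hz
  have b := h2 z hz
  constructor
  · rw [map_add, add_mul, Complex.add_im]
    exact add_nonneg a.1 b.1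
  · rw [map_add, map_add, mul_add, Complex.add_im]
    exact add_nonneg a.2 b.2
lemma RI.X_right {f g : ℝ[X]} (h : RI f g) : RI g (X * f) := fun z hz => by
  have a := h z hz
  constructor
  · simpa using a.2
  · have e : z * aeval z g * (starRingEnd ℂ) (aeval z (X * f)) =
        (Complex.normSq z : ℂ) * (aeval z g * (starRingEnd ℂ) (aeval z f)) := by
      rw [← Complex.mul_conj]; simp; ring
    rw [e, Complex.im_ofReal_mul]
    exact mul_nonneg (Complex.normSq_nonneg _) a.1
lemma RI.X_X {f g : ℝ[X]} (h : RI f g) : RI (X * f) (X * g) := h.X_right.X_right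
lemma RI.sum_left {ι : Type*} (s : Finset ι) (f : ι → ℝ[X]) (g : ℝ[X])
    (h : ∀ i ∈ s, RI (f i) g) : RI (∑ i ∈ s, f i) g := by
  classical
  induction s using Finset.induction_on with
  | empty => simpa using RI.zero_left g
  | insert a s ha ih =>
    rw [Finset.sum_insert ha]
    exact (h a (by simp)).add_left (ih fun i hi => h i (by simp [hi]))
lemma RI.sum_right {ι : Type*} (s : Finset ι) (f : ι → ℝ[X]) (g : ℝ[X])
    (h : ∀ i ∈ s, RI g (f i)) : RI g (∑ i ∈ s, f i) := by
  classical
  induction s using Finset.induction_on with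
  | empty => simpa using RI.zero_right g
  | insert a s ha ih =>
    rw [Finset.sum_insert ha]
    exact (h a (by simp)).add_right (ih fun i hi => h i (by simp [hi]))
lemma RI.sum_sum {ι κ : Type*} (s : Finset ι) (t : Finset κ) (f : ι → ℝ[X]) (g : κ → ℝ[X])
    (h : ∀ i ∈ s, ∀ j ∈ t, RI (f i) (g j)) : RI (∑ i ∈ s, f i) (∑ j ∈ t, g j) :=
  RI.sum_left _ _ _ fun i hi => RI.sum_right _ _ _ fun j hj => h i hi j hj

lemma StableP.add {f g : ℝ[X]} (hf : StableP f) (hg : StableP g) (h : RI f g) :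
    StableP (f + g) := by
  rcases hf with rfl | hf
  · simpa using hg
  right
  intro z hz h0
  have e : aeval z g = - aeval z f := by
    rw [map_add] at h0; linear_combination h0
  have := (h z hz).2
  rw [e, map_neg, mul_neg, mul_assoc, Complex.mul_conj, mul_comm, Complex.neg_im,
    Complex.im_ofReal_mul] at this
  have := mul_pos (Complex.normSq_pos.2 (hf z hz)) hz
  linarith
lemma StableP.X_mul {f : ℝ[X]} (hf : StableP f) : StableP (X * f) := by
  rcases hf with rfl | hf
  · left; simp
  · right
    intro z hz
    have : z ≠ 0 := by rintro rfl; simp at hz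
    simpa [this] using hf z hz
lemma StableP.sum_Ico (f : ℕ → ℝ[X]) (k l : ℕ) (hs : ∀ i, i < l → StableP (f i))
    (h : ∀ i j, i ≤ j → j < l → RI (f i) (f j)) : StableP (∑ i ∈ Finset.Ico k l, f i) := by
  induction l with
  | zero => left; simp
  | succ l ih =>
    by_cases hk : k ≤ l
    · rw [Finset.sum_Ico_succ_top hk]
      refine StableP.add (ih (fun i hi => hs i (by omega)) fun i j hi hj => h i j hi (by omega))
        (hs l (by omega)) (RI.sum_left _ _ _ fun i hi => h i l ?_ (by omega))
      simp at hi; omega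
    · left; rw [Finset.Ico_eq_empty (by omega)]; simp

/-- the inductive invariant -/
structure IsoInv (n : ℕ) (a b : ℕ → ℝ[X]) : Prop where
  sa : ∀ i ≤ n, StableP (a i)
  sb : ∀ i ≤ n, StableP (b i)
  sm : ∀ i ≤ n, StableP (a i + b i)
  aa : ∀ i j, i ≤ j → j ≤ n → RI (a i) (a j)
  bb : ∀ i j, i ≤ j → j ≤ n → RI (b i) (b j)
  ab : ∀ i j, i ≤ n → j ≤ n → RI (a i) (b j)
  mm : ∀ i j, i ≤ j → j ≤ n → RI (a i + b i) (a j + b j)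

lemma IsoInv.step {n : ℕ} {a b a' b' : ℕ → ℝ[X]} (H : IsoInv n a b)
    (ha : ∀ k ≤ n + 1, a' k = ∑ j ∈ Finset.Ico k (n + 1), (a j + b j))
    (hb : ∀ k ≤ n + 1, b' k = X * ∑ j ∈ Finset.Ico 0 k, a j) : IsoInv (n + 1) a' b' := by
  have sa : ∀ i ≤ n + 1, StableP (a' i) := fun i hi => by
    rw [ha i hi]
    exact StableP.sum_Ico _ _ _ (fun j hj => H.sm j (by omega))
      fun j l h1 h2 => H.mm j l h1 (by omega)
  have sb : ∀ i ≤ n + 1, StableP (b' i) := fun i hi => by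
    rw [hb i hi]
    exact (StableP.sum_Ico _ _ _ (fun j hj => H.sa j (by omega))
      fun j l h1 h2 => H.aa j l h1 (by omega)).X_mul
  have am : ∀ i j, i ≤ j → j ≤ n → RI (a i) (a j + b j) := fun i j h1 h2 =>
    (H.aa i j h1 h2).add_right (H.ab i j (by omega) h2)
  have ab : ∀ i j, i ≤ n + 1 → j ≤ n + 1 → RI (a' i) (b' j) := fun k l hk hl => by
    rw [ha k hk, hb l hl]
    apply RI.X_right
    rcases le_total l k with h | h
    · refine RI.sum_sum _ _ _ _ fun i hi j hj => ?_
      simp at hi hj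
      exact am i j (by omega) (by omega)
    · rw [Finset.sum_add_distrib]
      refine RI.add_right ?_ (RI.sum_sum _ _ _ _ fun i hi j hj => ?_)
      · rw [← Finset.sum_Ico_consecutive _ (Nat.zero_le k) h,
          ← Finset.sum_Ico_consecutive _ h hl]
        refine RI.add_left (RI.add_right ?_ ?_) (RI.add_right (RI.refl _) ?_) <;>
        · refine RI.sum_sum _ _ _ _ fun i hi j hj => ?_
          simp at hi hj
          exact H.aa i j (by omega) (by omega)
      · simp at hi hj
        exact H.ab i j (by omega) (by omega)
  refine ⟨sa, sb, fun i hi => (sa i hi).add (sb i hi) (ab i i hi hi), ?_, ?_, ab, ?_⟩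
  · intro k l h hl
    rw [ha k (by omega), ha l hl, ← Finset.sum_Ico_consecutive _ h hl]
    refine RI.add_left (RI.sum_sum _ _ _ _ fun i hi j hj => ?_) (RI.refl _)
    simp at hi hj
    exact H.mm i j (by omega) (by omega)
  · intro k l h hl
    rw [hb k (by omega), hb l hl, ← Finset.sum_Ico_consecutive _ (Nat.zero_le k) h]
    refine RI.X_X (RI.add_right (RI.refl _) (RI.sum_sum _ _ _ _ fun i hi j hj => ?_))
    simp at hi hj
    exact H.aa i j (by omega) (by omega)
  · intro k l h hl
    rw [ha k (by omega), ha l hl, hb k (by omega), hb l hl,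
      ← Finset.sum_Ico_consecutive _ (Nat.zero_le k) h, ← Finset.sum_Ico_consecutive _ h hl,
      mul_add]
    set A := ∑ j ∈ Finset.Ico 0 k, a j with hA
    set B := ∑ j ∈ Finset.Ico k l, a j with hB
    set M := ∑ j ∈ Finset.Ico k l, (a j + b j) with hM
    set N := ∑ j ∈ Finset.Ico l (n + 1), (a j + b j) with hN
    have hBM : RI B M := by
      rw [hM, Finset.sum_add_distrib]
      refine (RI.refl B).add_right (RI.sum_sum _ _ _ _ fun i hi j hj => ?_)
      simp at hi hj
      exact H.ab i j (by omega) (by omega)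
    have hMN : RI M N := by
      refine RI.sum_sum _ _ _ _ fun i hi j hj => ?_
      simp at hi hj
      exact H.mm i j (by omega) (by omega)
    have hAM : RI A M := by
      refine RI.sum_sum _ _ _ _ fun i hi j hj => ?_
      simp at hi hj
      exact am i j (by omega) (by omega)
    have hAN : RI A N := by
      refine RI.sum_sum _ _ _ _ fun i hi j hj => ?_
      simp at hi hj
      exact am i j (by omega) (by omega)
    have hBN : RI B N := by
      refine RI.sum_sum _ _ _ _ fun i hi j hj => ?_
      simp at hi hj
      exact am i j (by omega) (by omega)
    have hAB : RI A B := by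
      refine RI.sum_sum _ _ _ _ fun i hi j hj => ?_
      simp at hi hj
      exact H.aa i j (by omega) (by omega)
    have e1 : M + N + X * A = M + (N + X * A) := by ring
    have e2 : N + (X * A + X * B) = (N + X * A) + X * B := by ring
    rw [e1, e2]
    exact RI.add_left ((hMN.add_right hAM.X_right).add_right hBM.X_right)
      ((RI.refl _).add_right (hBN.X_right.add_left hAB.X_X))

/-- the argument of `s + ε i - a` -/
noncomputable def thA (ε s a : ℝ) : ℝ := Real.pi / 2 - Real.arctan ((s - a) / ε)

lemma thA_spec (ε s a : ℝ) (hε : 0 < ε) : ∃ r : ℝ, 0 < r ∧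
    ((s : ℂ) + ε * Complex.I - a) = r * Complex.exp ((thA ε s a : ℝ) * Complex.I) := by
  set u := (s - a) / ε with hu
  have hu' : s - a = u * ε := by rw [hu]; field_simp
  have hp : 0 < Real.sqrt (1 + u ^ 2) := Real.sqrt_pos.2 (by positivity)
  refine ⟨ε * Real.sqrt (1 + u ^ 2), by positivity, ?_⟩
  rw [Complex.exp_mul_I, ← Complex.ofReal_cos, ← Complex.ofReal_sin, thA, ← hu,
    Real.cos_pi_div_two_sub, Real.sin_pi_div_two_sub, Real.sin_arctan, Real.cos_arctan]
  apply Complex.ext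
  · simp
    rw [hu']; field_simp
  · simp
    field_simp

lemma thA_mset (ε s : ℝ) (hε : 0 < ε) (A : Multiset ℝ) : ∃ r : ℝ, 0 < r ∧
    (A.map fun a : ℝ => ((s : ℂ) + ε * Complex.I - a)).prod =
      r * Complex.exp (((A.map (thA ε s)).sum : ℝ) * Complex.I) := by
  induction A using Multiset.induction_on with
  | empty => exact ⟨1, one_pos, by simp⟩
  | cons a A ih =>
    obtain ⟨r, hr, h⟩ := ih
    obtain ⟨q, hq, h'⟩ := thA_spec ε s a hε
    refine ⟨q * r, by positivity, ?_⟩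
    simp only [Multiset.map_cons, Multiset.prod_cons, Multiset.sum_cons, h, h']
    push_cast
    rw [add_mul, Complex.exp_add]; ring

lemma thA_cont (ε : ℝ) (A : Multiset ℝ) : Continuous fun s => (A.map (thA ε s)).sum := by
  induction A using Multiset.induction_on with
  | empty => simp; exact continuous_const
  | cons a A ih =>
    simp only [Multiset.map_cons, Multiset.sum_cons]
    refine Continuous.add ?_ ih
    unfold thA
    exact continuous_const.sub (Real.continuous_arctan.comp (by fun_prop))

open Filter Topology in
lemma thA_lim (ε : ℝ) (hε : 0 < ε) (A : Multiset ℝ) :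
    Tendsto (fun s => (A.map (thA ε s)).sum) atTop (𝓝 0) := by
  induction A using Multiset.induction_on with
  | empty => simp
  | cons a A ih =>
    simp only [Multiset.map_cons, Multiset.sum_cons]
    rw [← add_zero (0 : ℝ)]
    refine Tendsto.add ?_ ih
    unfold thA
    rw [← sub_self (Real.pi / 2)]
    refine tendsto_const_nhds.sub ((Real.tendsto_arctan_atTop.mono_right nhdsWithin_le_nhds).comp ?_)
    exact (tendsto_atTop_add_const_right _ (-a) tendsto_id).atTop_div_const hε

open Filter Topology in
lemma thA_lim0 (t : ℝ) (A : Multiset ℝ) (ht : t ∉ A) :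
    Tendsto (fun ε => (A.map (thA ε t)).sum) (𝓝[>] 0)
      (𝓝 (Real.pi * (A.countP (fun a => t < a) : ℕ))) := by
  induction A using Multiset.induction_on with
  | empty => simp
  | cons a A ih =>
    simp only [Multiset.mem_cons, not_or] at ht
    simp only [Multiset.map_cons, Multiset.sum_cons, Multiset.countP_cons]
    have h1 := ih ht.2
    have key : Tendsto (fun ε => thA ε t a) (𝓝[>] 0)
        (𝓝 (Real.pi * ((if t < a then 1 else 0 : ℕ) : ℝ))) := by
      unfold thA
      split_ifs with h
      · have : Real.pi * ((1 : ℕ) : ℝ) = Real.pi / 2 - (-(Real.pi / 2)) := by push_cast; ring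
        rw [this]
        refine tendsto_const_nhds.sub
          ((Real.tendsto_arctan_atBot.mono_right nhdsWithin_le_nhds).comp ?_)
        exact tendsto_inv_nhdsGT_zero.const_mul_atTop_of_neg (r := t - a) (by linarith)
      · have : Real.pi * ((0 : ℕ) : ℝ) = Real.pi / 2 - (Real.pi / 2) := by push_cast; ring
        rw [this]
        refine tendsto_const_nhds.sub
          ((Real.tendsto_arctan_atTop.mono_right nhdsWithin_le_nhds).comp ?_)
        have : a < t := lt_of_le_of_ne (not_lt.1 h) (Ne.symm ht.1)
        exact tendsto_inv_nhdsGT_zero.const_mul_atTop (r := t - a) (by linarith)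
    have := key.add h1
    convert this using 2
    push_cast; ring

lemma im_exp_aux (r x : ℝ) : ((r : ℂ) * Complex.exp ((x : ℝ) * Complex.I)).im = r * Real.sin x := by
  rw [Complex.im_ofReal_mul, Complex.exp_ofReal_mul_I_im]

lemma conj_exp_aux (x : ℝ) : (starRingEnd ℂ) (Complex.exp ((x : ℝ) * Complex.I)) =
    Complex.exp (((-x : ℝ) : ℂ) * Complex.I) := by
  rw [← Complex.exp_conj]; simp

open Filter Topology in
lemma phi_bound (A B : Multiset ℝ)
    (h : ∀ z : ℂ, 0 < z.im →
      0 ≤ ((B.map fun b : ℝ => z - b).prod * (starRingEnd ℂ) (A.map fun b : ℝ => z - b).prod).im ∧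
      0 ≤ (z * (A.map fun b : ℝ => z - b).prod *
        (starRingEnd ℂ) (B.map fun b : ℝ => z - b).prod).im)
    (ε : ℝ) (hε : 0 < ε) (s : ℝ) :
    0 ≤ (B.map (thA ε s)).sum - (A.map (thA ε s)).sum ∧
    (B.map (thA ε s)).sum - (A.map (thA ε s)).sum ≤ Real.pi := by
  set φ : ℝ → ℝ := fun s => (B.map (thA ε s)).sum - (A.map (thA ε s)).sum with hφ
  have hc : Continuous φ := (thA_cont ε B).sub (thA_cont ε A)
  have hl : Tendsto φ atTop (𝓝 0) := by
    have := (thA_lim ε hε B).sub (thA_lim ε hε A)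
    simpa using this
  have hs : ∀ s, 0 ≤ Real.sin (φ s) ∧ 0 ≤ Real.sin (thA ε s 0 - φ s) := fun s => by
    obtain ⟨r, hr, e1⟩ := thA_mset ε s hε A
    obtain ⟨q, hq, e2⟩ := thA_mset ε s hε B
    obtain ⟨p, hp, e3⟩ := thA_spec ε s 0 hε
    have := h ((s : ℂ) + ε * Complex.I) (by simpa using hε)
    rw [e1, e2] at this
    simp only [Complex.ofReal_zero, sub_zero] at e3
    rw [e3, map_mul, map_mul, conj_exp_aux, conj_exp_aux, Complex.conj_ofReal,
      Complex.conj_ofReal] at this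
    have w1 : ((q : ℂ) * Complex.exp (((B.map (thA ε s)).sum : ℝ) * Complex.I) *
        (r * Complex.exp (((-(A.map (thA ε s)).sum : ℝ) : ℂ) * Complex.I))) =
        ((q * r : ℝ) : ℂ) * Complex.exp ((φ s : ℝ) * Complex.I) := by
      have : ((φ s : ℝ) : ℂ) * Complex.I = ((B.map (thA ε s)).sum : ℝ) * Complex.I +
        ((-(A.map (thA ε s)).sum : ℝ) : ℂ) * Complex.I := by rw [hφ]; push_cast; ring
      rw [this, Complex.exp_add]; push_cast; ring
    have w2 : ((p : ℂ) * Complex.exp ((thA ε s 0 : ℝ) * Complex.I) *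
        (r * Complex.exp (((A.map (thA ε s)).sum : ℝ) * Complex.I)) *
        (q * Complex.exp (((-(B.map (thA ε s)).sum : ℝ) : ℂ) * Complex.I))) =
        ((p * r * q : ℝ) : ℂ) * Complex.exp ((thA ε s 0 - φ s : ℝ) * Complex.I) := by
      have : ((thA ε s 0 - φ s : ℝ) : ℂ) * Complex.I = (thA ε s 0 : ℝ) * Complex.I +
        ((A.map (thA ε s)).sum : ℝ) * Complex.I +
        ((-(B.map (thA ε s)).sum : ℝ) : ℂ) * Complex.I := by rw [hφ]; push_cast; ring
      rw [this, Complex.exp_add, Complex.exp_add]; push_cast; ring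
    rw [w1, w2, im_exp_aux, im_exp_aux] at this
    exact ⟨nonneg_of_mul_nonneg_right this.1 (by positivity),
      nonneg_of_mul_nonneg_right this.2 (by positivity)⟩
  have hpi := Real.pi_pos
  have hth : ∀ s, 0 < thA ε s 0 ∧ thA ε s 0 < Real.pi := fun s => by
    have h1 := Real.arctan_lt_pi_div_two ((s - 0) / ε)
    have h2 := Real.neg_pi_div_two_lt_arctan ((s - 0) / ε)
    unfold thA
    constructor <;> linarith
  have h1 : ∀ s, φ s < Real.pi := fun s => by
    by_contra hcon
    obtain ⟨s', hs'⟩ := mem_range_of_exists_le_of_exists_ge hc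
      ((hl.eventually (gt_mem_nhds hpi)).exists.imp fun _ h => le_of_lt h) ⟨s, not_lt.1 hcon⟩
    have := (hs s').2
    rw [hs', Real.sin_sub_pi] at this
    have := Real.sin_pos_of_pos_of_lt_pi (hth s').1 (hth s').2
    linarith
  have h2 : ∀ s, -(Real.pi / 2) < φ s := fun s => by
    by_contra hcon
    obtain ⟨s', hs'⟩ := mem_range_of_exists_le_of_exists_ge hc ⟨s, not_lt.1 hcon⟩
      ((hl.eventually (lt_mem_nhds (a := -(Real.pi / 2)) (by linarith))).exists.imp
        fun _ h => le_of_lt h)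
    have := (hs s').1
    rw [hs', Real.sin_neg, Real.sin_pi_div_two] at this
    linarith
  refine ⟨?_, (h1 s).le⟩
  by_contra hcon
  have := Real.sin_neg_of_neg_of_neg_pi_lt (not_le.1 hcon) (by have := h2 s; linarith)
  exact absurd (hs s).1 (not_le.2 this)

open Filter Topology in
lemma count_interlace (A B : Multiset ℝ)
    (h : ∀ z : ℂ, 0 < z.im →
      0 ≤ ((B.map fun b : ℝ => z - b).prod * (starRingEnd ℂ) (A.map fun b : ℝ => z - b).prod).im ∧
      0 ≤ (z * (A.map fun b : ℝ => z - b).prod *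
        (starRingEnd ℂ) (B.map fun b : ℝ => z - b).prod).im)
    (t : ℝ) (hA : t ∉ A) (hB : t ∉ B) :
    A.countP (fun a => t < a) ≤ B.countP (fun a => t < a) ∧
    B.countP (fun a => t < a) ≤ A.countP (fun a => t < a) + 1 := by
  have hl := (thA_lim0 t B hB).sub (thA_lim0 t A hA)
  have b1 := ge_of_tendsto hl (b := 0) (eventually_mem_nhdsWithin.mono fun ε hε =>
    (phi_bound A B h ε hε t).1)
  have b2 := le_of_tendsto hl (b := Real.pi) (eventually_mem_nhdsWithin.mono fun ε hε =>
    (phi_bound A B h ε hε t).2)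
  have hpi := Real.pi_pos
  rw [← mul_sub] at b1 b2
  have c1 := nonneg_of_mul_nonneg_right b1 hpi
  have c2 : ((B.countP (fun a => t < a) : ℕ) : ℝ) - (A.countP (fun a => t < a) : ℕ) ≤ 1 := by
    by_contra hcon
    nlinarith
  constructor
  · have : ((A.countP (fun a => t < a) : ℕ) : ℝ) ≤ (B.countP (fun a => t < a) : ℕ) := by linarith
    exact_mod_cast this
  · have : ((B.countP (fun a => t < a) : ℕ) : ℝ) ≤ (A.countP (fun a => t < a) : ℕ) + 1 := by
      linarith
    exact_mod_cast this
lemma desc_pairwise (f : ℝ[X]) : (descRoots f).Pairwise (· ≥ ·) := by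
  unfold descRoots
  rw [List.pairwise_reverse]
  exact f.roots.pairwise_sort (· ≤ ·)

lemma desc_countP (f : ℝ[X]) (t : ℝ) :
    (descRoots f).countP (fun a => t < a) = f.roots.countP (fun a => t < a) := by
  unfold descRoots
  rw [List.countP_reverse, ← Multiset.coe_countP, Multiset.sort_eq]

lemma desc_length (f : ℝ[X]) : (descRoots f).length = f.roots.card := by
  unfold descRoots; simp

lemma countP_of_lt (l : List ℝ) (hl : l.Pairwise (· ≥ ·)) (t : ℝ) (i : ℕ) (hi : i < l.length)
    (h : t < l[i]) : i + 1 ≤ l.countP (fun a => t < a) := by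
  have h1 : (l.take (i + 1)).countP (fun a => t < a) = (l.take (i + 1)).length := by
    rw [List.countP_eq_length]
    intro a ha
    obtain ⟨j, hj, rfl⟩ := List.mem_take_iff_getElem.1 ha
    have : l[j] ≥ l[i] := by
      rcases Nat.lt_or_ge j i with h' | h'
      · exact List.pairwise_iff_getElem.1 hl j i _ _ h'
      · have : j = i := by omega
        subst this; exact le_rfl
    simp; linarith
  have h2 := (List.take_sublist (i + 1) l).countP_le (p := fun a => decide (t < a))
  rw [h1, List.length_take] at h2
  omega

lemma countP_of_gt (l : List ℝ) (hl : l.Pairwise (· ≥ ·)) (t : ℝ) (i : ℕ) (hi : i < l.length)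
    (h : l[i] < t) : l.countP (fun a => t < a) ≤ i := by
  conv_lhs => rw [← List.take_append_drop i l]
  rw [List.countP_append]
  have h1 : (l.drop i).countP (fun a => t < a) = 0 := by
    rw [List.countP_eq_zero]
    intro a ha
    obtain ⟨j, hj, rfl⟩ := List.mem_drop_iff_getElem.1 ha
    have : l[i] ≥ l[i + j] := by
      rcases Nat.eq_zero_or_pos j with h' | h'
      · subst h'; exact le_rfl
      · exact List.pairwise_iff_getElem.1 hl i (i + j) _ _ (by omega)
    simp; linarith
  have h2 := List.countP_le_length (p := fun a => decide (t < a)) (l := l.take i)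
  rw [List.length_take] at h2
  omega

lemma StableP.realRooted {f : ℝ[X]} (h : StableP f) : RealRooted f := by
  intro z hz
  rcases h with rfl | h
  · simp at hz
  have h0 := (mem_roots'.1 hz).2
  rw [IsRoot.def, eval_map_algebraMap] at h0
  by_contra hne
  rcases lt_or_gt_of_ne hne with hl | hl
  · refine h ((starRingEnd ℂ) z) (by simpa using hl) ?_
    have := aeval_conj f z
    rw [this, h0, map_zero]
  · exact h z hl h0

lemma RealRooted.splits {f : ℝ[X]} (h : RealRooted f) : f.Splits := by
  refine Splits.of_splits_map (algebraMap ℝ ℂ) (IsAlgClosed.splits _) fun z hz => ?_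
  exact ⟨z.re, Complex.ext (by simp) (by simpa using (h z hz).symm)⟩

lemma aeval_prod {f : ℝ[X]} (h : f.Splits) (z : ℂ) :
    aeval z f = (f.leadingCoeff : ℂ) * (f.roots.map fun b : ℝ => z - b).prod := by
  conv_lhs => rw [h.eq_prod_roots]
  rw [map_mul, aeval_C, map_multiset_prod, Multiset.map_map]
  simp

lemma exists_sep (s : Multiset ℝ) (a b : ℝ) (h : a < b) : ∃ t, a < t ∧ t < b ∧ t ∉ s := by
  have := (Set.Ioo_infinite h).exists_notMem_finset s.toFinset
  obtain ⟨t, h1, h2⟩ := this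
  exact ⟨t, h1.1, h1.2, by simpa using h2⟩

lemma exists_below (s : Multiset ℝ) : ∃ t, ∀ a ∈ s, t < a := by
  obtain ⟨m, hm⟩ := s.toFinset.bddBelow
  exact ⟨m - 1, fun a ha => by
    have := hm (show a ∈ (s.toFinset : Set ℝ) by simpa using ha)
    linarith⟩

lemma interlaces_of_RI {f g : ℝ[X]} (sf : StableP f) (sg : StableP g) (pf : NonnegCoeffs f)
    (pg : NonnegCoeffs g) (h : RI f g) : Interlaces f g := by
  refine ⟨sf.realRooted, sg.realRooted, ?_⟩
  by_cases hf0 : f = 0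
  · exact Or.inl hf0
  by_cases hg0 : g = 0
  · exact Or.inr (Or.inl hg0)
  refine Or.inr (Or.inr (Or.inr ?_))
  have lf : 0 < f.leadingCoeff :=
    lt_of_le_of_ne (pf _) (Ne.symm (leadingCoeff_ne_zero.2 hf0))
  have lg : 0 < g.leadingCoeff :=
    lt_of_le_of_ne (pg _) (Ne.symm (leadingCoeff_ne_zero.2 hg0))
  have spf := sf.realRooted.splits
  have spg := sg.realRooted.splits
  have key := count_interlace f.roots g.roots (fun z hz => by
    have := h z hz
    rw [aeval_prod spf, aeval_prod spg, map_mul, map_mul, Complex.conj_ofReal,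
      Complex.conj_ofReal] at this
    obtain ⟨h1, h2⟩ := this
    constructor
    · refine nonneg_of_mul_nonneg_right (a := g.leadingCoeff * f.leadingCoeff) ?_
        (mul_pos lg lf)
      rw [← Complex.im_ofReal_mul]
      refine le_of_le_of_eq h1 (congrArg Complex.im ?_)
      push_cast; ring
    · refine nonneg_of_mul_nonneg_right (a := g.leadingCoeff * f.leadingCoeff) ?_
        (mul_pos lg lf)
      rw [← Complex.im_ofReal_mul]
      refine le_of_le_of_eq h2 (congrArg Complex.im ?_)
      push_cast; ring)
  refine ⟨?_, ?_, ?_⟩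
  · obtain ⟨t, ht⟩ := exists_below (f.roots + g.roots)
    have := key t (fun h => lt_irrefl _ (ht t (by simp [Multiset.mem_add, h])))
      (fun h => lt_irrefl _ (ht t (Multiset.mem_add.2 (Or.inr h))))
    rw [Multiset.countP_eq_card.2 fun a ha => ht a (Multiset.mem_add.2 (Or.inl ha)),
      Multiset.countP_eq_card.2 fun a ha => ht a (Multiset.mem_add.2 (Or.inr ha)),
      ← spf.natDegree_eq_card_roots, ← spg.natDegree_eq_card_roots] at this
    omega
  · intro i hf hg
    by_contra hcon
    obtain ⟨t, h1, h2, h3⟩ := exists_sep (f.roots + g.roots) _ _ (not_le.1 hcon)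
    have := key t (fun h => h3 (Multiset.mem_add.2 (Or.inl h)))
      (fun h => h3 (Multiset.mem_add.2 (Or.inr h)))
    rw [← desc_countP, ← desc_countP] at this
    have c1 := countP_of_lt _ (desc_pairwise f) t i hf h2
    have c2 := countP_of_gt _ (desc_pairwise g) t i hg h1
    omega
  · intro i hf hg
    by_contra hcon
    obtain ⟨t, h1, h2, h3⟩ := exists_sep (f.roots + g.roots) _ _ (not_le.1 hcon)
    have := key t (fun h => h3 (Multiset.mem_add.2 (Or.inl h)))
      (fun h => h3 (Multiset.mem_add.2 (Or.inr h)))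
    rw [← desc_countP, ← desc_countP] at this
    have c1 := countP_of_lt _ (desc_pairwise g) t (i + 1) hg h2
    have c2 := countP_of_gt _ (desc_pairwise f) t i hf h1
    omega

/-- prepend the value `p` to `σ` -/
def consPerm {n : ℕ} (p : Fin (n + 2)) (σ : Equiv.Perm (Fin (n + 1))) : Equiv.Perm (Fin (n + 2)) :=
  ((finSuccEquiv' 0).trans (Equiv.optionCongr σ)).trans (finSuccEquiv' p).symm

lemma consPerm_zero {n : ℕ} (p : Fin (n + 2)) (σ : Equiv.Perm (Fin (n + 1))) :
    consPerm p σ 0 = p := by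
  simp [consPerm]

lemma consPerm_succ {n : ℕ} (p : Fin (n + 2)) (σ : Equiv.Perm (Fin (n + 1))) (i : Fin (n + 1)) :
    consPerm p σ i.succ = p.succAbove (σ i) := by
  have : i.succ = (0 : Fin (n + 2)).succAbove i := by simp
  rw [this]
  simp only [consPerm, Equiv.trans_apply, finSuccEquiv'_succAbove]
  simp

lemma consPerm_inj {n : ℕ} (p : Fin (n + 2)) : Function.Injective (consPerm p) := by
  intro σ τ h
  ext i
  have := congrArg (fun w : Equiv.Perm (Fin (n + 2)) => w i.succ) h
  simp only [consPerm_succ] at this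
  rw [Fin.succAbove_right_injective this]

lemma consPerm_surj {n : ℕ} (w : Equiv.Perm (Fin (n + 2))) : ∃ σ, consPerm (w 0) σ = w := by
  have : ∀ i : Fin (n + 1), ∃ y, (w 0).succAbove y = w i.succ := fun i =>
    Fin.exists_succAbove_eq (fun h => Fin.succ_ne_zero i (w.injective h))
  choose s hs using this
  have hinj : Function.Injective s := fun i j h => by
    have := hs i
    rw [h, hs j] at this
    exact (Fin.succ_injective _ (w.injective this)).symm
  refine ⟨Equiv.ofBijective s (Finite.injective_iff_bijective.1 hinj), ?_⟩
  ext i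
  refine Fin.cases ?_ (fun i => ?_) i
  · rw [consPerm_zero]
  · rw [consPerm_succ]; simp [hs]

lemma mem_desSet {n : ℕ} (w : Equiv.Perm (Fin (n + 1))) (m : ℕ) :
    m ∈ desSet w ↔ ∃ i : Fin n, w i.succ < w i.castSucc ∧ i.val + 1 = m := by
  simp [desSet]

lemma zero_notMem_desSet {n : ℕ} (w : Equiv.Perm (Fin (n + 1))) : 0 ∉ desSet w := by
  simp [mem_desSet]

lemma desSet_le {n : ℕ} (w : Equiv.Perm (Fin (n + 1))) {m : ℕ} (h : m ∈ desSet w) :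
    1 ≤ m ∧ m ≤ n := by
  obtain ⟨i, -, rfl⟩ := (mem_desSet w m).1 h
  have := i.2
  omega

lemma one_mem_cons {n : ℕ} (p : Fin (n + 2)) (σ : Equiv.Perm (Fin (n + 1))) :
    1 ∈ desSet (consPerm p σ) ↔ (σ 0 : ℕ) < p := by
  rw [mem_desSet]
  have key : p.succAbove (σ 0) < p ↔ (σ 0 : ℕ) < p := by
    rw [Fin.succAbove_lt_iff_castSucc_lt, Fin.lt_def]; simp
  rw [← key]
  constructor
  · rintro ⟨i, h, hi⟩
    have : i = 0 := Fin.ext (by simpa using hi)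
    subst this
    rw [consPerm_succ, Fin.castSucc_zero, consPerm_zero] at h
    exact h
  · intro h
    refine ⟨0, ?_, by simp⟩
    rw [consPerm_succ, Fin.castSucc_zero, consPerm_zero]
    exact h

lemma succ_mem_cons {n : ℕ} (p : Fin (n + 2)) (σ : Equiv.Perm (Fin (n + 1))) (m : ℕ) :
    m + 2 ∈ desSet (consPerm p σ) ↔ m + 1 ∈ desSet σ := by
  rw [mem_desSet, mem_desSet]
  constructor
  · rintro ⟨i, h, hi⟩
    have hi0 : i ≠ 0 := by rintro rfl; simp at hi
    obtain ⟨j, rfl⟩ := Fin.exists_succ_eq.2 hi0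
    rw [consPerm_succ, ← Fin.succ_castSucc, consPerm_succ,
      (Fin.strictMono_succAbove p).lt_iff_lt] at h
    exact ⟨j, h, by simpa using hi⟩
  · rintro ⟨j, h, hj⟩
    refine ⟨j.succ, ?_, by simpa using hj⟩
    rw [consPerm_succ, ← Fin.succ_castSucc, consPerm_succ,
      (Fin.strictMono_succAbove p).lt_iff_lt]
    exact h

lemma desSet_cons {n : ℕ} (p : Fin (n + 2)) (σ : Equiv.Perm (Fin (n + 1))) :
    desSet (consPerm p σ) =
      (if (σ 0 : ℕ) < p then {1} else ∅) ∪ (desSet σ).image (· + 1) := by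
  ext m
  rcases m with _ | _ | m
  · have := zero_notMem_desSet (consPerm p σ)
    split_ifs <;> simp [this]
  · have := one_mem_cons p σ
    have h0 := zero_notMem_desSet σ
    simp only [zero_add, this]
    split_ifs with h <;> simp [h, h0]
  · have := succ_mem_cons p σ m
    simp only [add_assoc, Nat.reduceAdd, this]
    split_ifs with h <;> simp

lemma card_desSet_cons {n : ℕ} (p : Fin (n + 2)) (σ : Equiv.Perm (Fin (n + 1))) :
    (desSet (consPerm p σ)).card = (desSet σ).card + if (σ 0 : ℕ) < p then 1 else 0 := by
  have h0 := zero_notMem_desSet σ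
  rw [desSet_cons, Finset.card_union_of_disjoint, Finset.card_image_of_injective _
    (add_left_injective 1), add_comm]
  · split_ifs <;> simp
  · split_ifs <;> simp [h0]

/-- sum over `w` with `w 0 = k` as a sum over all shorter permutations -/
lemma sum_cons {n : ℕ} (p : Fin (n + 2)) (P : Equiv.Perm (Fin (n + 2)) → Prop) [DecidablePred P]
    (F : Equiv.Perm (Fin (n + 2)) → ℝ[X]) :
    ∑ w ∈ Finset.univ.filter (fun w : Equiv.Perm (Fin (n + 2)) => (w 0 : ℕ) = p ∧ P w), F w =
    ∑ σ ∈ Finset.univ.filter (fun σ : Equiv.Perm (Fin (n + 1)) => P (consPerm p σ)),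
      F (consPerm p σ) := by
  symm
  refine Finset.sum_bij (fun σ _ => consPerm p σ) ?_ (fun _ _ _ _ h => consPerm_inj p h) ?_
    (fun _ _ => rfl)
  · intro σ hσ
    simpa [consPerm_zero] using hσ
  · intro w hw
    simp only [Finset.mem_filter, Finset.mem_univ, true_and] at hw
    obtain ⟨σ, hσ⟩ := consPerm_surj w
    have : w 0 = p := Fin.ext hw.1
    rw [this] at hσ
    exact ⟨σ, by simp [hσ, hw.2], hσ⟩

/-- a sum of `pPoly`s as a single sum over permutations -/
lemma sum_pPoly (n : ℕ) (I : Finset ℕ) (S T : Finset ℕ) :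
    ∑ j ∈ I, pPoly n j S T = ∑ w ∈ Finset.univ.filter (fun w : Equiv.Perm (Fin (n + 1)) =>
      (w 0 : ℕ) ∈ I ∧ IsolatedSet (desSet w) ∧ S ⊆ desSet w ∧ desSet w ⊆ T),
      X ^ (desSet w).card := by
  unfold pPoly
  simp_rw [Finset.sum_filter]
  rw [Finset.sum_comm]
  refine Finset.sum_congr rfl fun w _ => ?_
  by_cases h : IsolatedSet (desSet w) ∧ S ⊆ desSet w ∧ desSet w ⊆ T
  · simp [h]
  · simp [h]

lemma iso_cons {n : ℕ} (p : Fin (n + 2)) (σ : Equiv.Perm (Fin (n + 1))) :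
    IsolatedSet (desSet (consPerm p σ)) ↔
      IsolatedSet (desSet σ) ∧ ((σ 0 : ℕ) < p → 1 ∉ desSet σ) := by
  constructor
  · intro h
    refine ⟨fun i hi hi' => ?_, fun h1 h2 => ?_⟩
    · have := (desSet_le σ hi).1
      obtain ⟨m, rfl⟩ : ∃ m, i = m + 1 := ⟨i - 1, by omega⟩
      exact h (m + 2) ((succ_mem_cons p σ m).2 hi) ((succ_mem_cons p σ (m + 1)).2 hi')
    · exact h 1 ((one_mem_cons p σ).2 h1) ((succ_mem_cons p σ 0).2 h2)
  · rintro ⟨h1, h2⟩ i hi hi'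
    rcases i with _ | _ | m
    · exact zero_notMem_desSet _ hi
    · exact h2 ((one_mem_cons p σ).1 hi) ((succ_mem_cons p σ 0).1 hi')
    · exact h1 (m + 1) ((succ_mem_cons p σ m).1 hi) ((succ_mem_cons p σ (m + 1)).1 hi')

lemma sub_cons {n : ℕ} (p : Fin (n + 2)) (σ : Equiv.Perm (Fin (n + 1))) (T T' : Finset ℕ)
    (hT : ∀ m, m + 1 ∈ T' ↔ m + 2 ∈ T) :
    desSet (consPerm p σ) ⊆ T ↔ ((σ 0 : ℕ) < p → 1 ∈ T) ∧ desSet σ ⊆ T' := by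
  constructor
  · intro h
    refine ⟨fun h1 => h ((one_mem_cons p σ).2 h1), fun i hi => ?_⟩
    have := (desSet_le σ hi).1
    obtain ⟨m, rfl⟩ : ∃ m, i = m + 1 := ⟨i - 1, by omega⟩
    exact (hT m).2 (h ((succ_mem_cons p σ m).2 hi))
  · rintro ⟨h1, h2⟩ i hi
    rcases i with _ | _ | m
    · exact absurd hi (zero_notMem_desSet _)
    · exact h1 ((one_mem_cons p σ).1 hi)
    · exact (hT m).1 (h2 ((succ_mem_cons p σ m).1 hi))

lemma pPoly_asc (n k : ℕ) (hk : k ≤ n + 1) (T T' : Finset ℕ)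
    (hT : ∀ m, m + 1 ∈ T' ↔ m + 2 ∈ T) :
    pPoly (n + 1) k ∅ (T.erase 1) = ∑ j ∈ Finset.Ico k (n + 1), pPoly n j ∅ T' := by
  have hT' : ∀ m, m + 1 ∈ T' ↔ m + 2 ∈ T.erase 1 := fun m => by simp [hT]
  rw [sum_pPoly]
  unfold pPoly
  rw [sum_cons (⟨k, by omega⟩ : Fin (n + 2))]
  refine Finset.sum_congr ?_ ?_
  · ext σ
    have := (σ 0).2
    simp only [Finset.mem_filter, Finset.mem_univ, true_and, iso_cons, sub_cons _ _ _ _ hT',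
      Finset.empty_subset, Finset.mem_Ico, Finset.mem_erase, ne_eq, not_true_eq_false, false_and]
    constructor
    · rintro ⟨⟨h1, -⟩, h3, h4⟩
      exact ⟨⟨not_lt.1 h3, this⟩, h1, h4⟩
    · rintro ⟨h1, h2, h3⟩
      exact ⟨⟨h2, fun h => absurd h (not_lt.2 h1.1)⟩, not_lt.2 h1.1, h3⟩
  · intro σ hσ
    simp only [Finset.mem_filter, Finset.mem_Ico] at hσ
    rw [card_desSet_cons, if_neg (by simp; omega)]
    rfl

lemma pPoly_desc (n k : ℕ) (hk : k ≤ n + 1) (T T' : Finset ℕ) (h1T : 1 ∈ T)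
    (hT : ∀ m, m + 1 ∈ T' ↔ m + 2 ∈ T) :
    pPoly (n + 1) k {1} T = X * ∑ j ∈ Finset.Ico 0 k, pPoly n j ∅ (T'.erase 1) := by
  rw [sum_pPoly, Finset.mul_sum]
  unfold pPoly
  rw [sum_cons (⟨k, by omega⟩ : Fin (n + 2))]
  refine Finset.sum_congr ?_ ?_
  · ext σ
    simp only [Finset.mem_filter, Finset.mem_univ, true_and, iso_cons, sub_cons _ _ _ _ hT,
      Finset.empty_subset, Finset.mem_Ico, Finset.singleton_subset_iff, one_mem_cons,
      Finset.subset_erase, h1T, implies_true, true_and, zero_le]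
    tauto
  · intro σ hσ
    simp only [Finset.mem_filter, Finset.mem_Ico] at hσ
    rw [card_desSet_cons, if_pos (by simp; omega), pow_succ, mul_comm]

lemma pPoly_mid (n k : ℕ) (T : Finset ℕ) :
    pPoly n k ∅ T = pPoly n k ∅ (T.erase 1) + pPoly n k {1} T := by
  unfold pPoly
  simp_rw [Finset.sum_filter]
  rw [← Finset.sum_add_distrib]
  refine Finset.sum_congr rfl fun w _ => ?_
  simp only [Finset.subset_erase, Finset.singleton_subset_iff, Finset.empty_subset, true_and]
  by_cases h : 1 ∈ desSet w <;> simp [h]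

lemma pPoly_desc_zero (n k : ℕ) (T : Finset ℕ) (h : 1 ∉ T) : pPoly n k {1} T = 0 := by
  unfold pPoly
  rw [Finset.filter_false_of_mem, Finset.sum_empty]
  rintro w - ⟨-, -, h1, h2⟩
  exact h (h2 (h1 (by simp)))

lemma pPoly_nonneg (n k : ℕ) (S T : Finset ℕ) : NonnegCoeffs (pPoly n k S T) := by
  intro i
  unfold pPoly
  rw [finsetSum_coeff]
  refine Finset.sum_nonneg fun w _ => ?_
  rw [coeff_X_pow]; split_ifs <;> simp

lemma pPoly_zero_zero (T : Finset ℕ) : pPoly 0 0 ∅ T = 1 := by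
  unfold pPoly
  have h : ∀ w : Equiv.Perm (Fin 1), desSet w = ∅ := fun w => by simp [desSet]
  simp [h, IsolatedSet]

lemma StableP.one : StableP 1 := Or.inr fun z _ => by simp
lemma StableP.zero : StableP 0 := Or.inl rfl

lemma inv_main (e n : ℕ) (he : e ≤ n) (he1 : e ≤ 1) :
    IsoInv n (fun k => pPoly n k ∅ ((Finset.Icc 1 (n - e)).erase 1))
      (fun k => pPoly n k {1} (Finset.Icc 1 (n - e))) := by
  induction n, he using Nat.le_induction with
  | base =>
    have hb : ∀ k, pPoly e k {1} (Finset.Icc 1 (e - e)) = 0 := fun k =>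
      pPoly_desc_zero _ _ _ (by simp)
    have ha : ∀ k ≤ e, pPoly e k ∅ ((Finset.Icc 1 (e - e)).erase 1) = if k = 0 then 1 else 0 := by
      intro k hk
      rcases (show e = 0 ∨ e = 1 by omega) with rfl | rfl
      · have : k = 0 := by omega
        subst this
        simpa using pPoly_zero_zero _
      · rw [pPoly_asc 0 k hk _ ∅ (by simp)]
        rcases (show k = 0 ∨ k = 1 by omega) with rfl | rfl
        · simp [pPoly_zero_zero]
        · simp
    have s : ∀ i : ℕ, StableP (if i = 0 then (1 : ℝ[X]) else 0) := fun i => by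
      split_ifs
      exacts [StableP.one, StableP.zero]
    have r : ∀ i j : ℕ, RI (if i = 0 then (1 : ℝ[X]) else 0) (if j = 0 then (1 : ℝ[X]) else 0) := by
      intro i j
      split_ifs
      exacts [RI.refl _, RI.zero_right _, RI.zero_left _, RI.refl _]
    constructor
    · intro i hi
      simp only [ha i hi]; exact s i
    · intro i hi
      simp only [hb]; exact StableP.zero
    · intro i hi
      simp only [ha i hi, hb, add_zero]; exact s i
    · intro i j hij hj
      simp only [ha i (hij.trans hj), ha j hj]; exact r i j
    · intro i j hij hj
      simp only [hb]; exact RI.zero_left _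
    · intro i j hij hj
      simp only [hb]; exact RI.zero_right _
    · intro i j hij hj
      simp only [ha i (hij.trans hj), ha j hj, hb, add_zero]; exact r i j
  | succ n hn ih =>
    have hT : ∀ m, m + 1 ∈ Finset.Icc 1 (n - e) ↔ m + 2 ∈ Finset.Icc 1 (n + 1 - e) := by
      intro m
      simp only [Finset.mem_Icc]; omega
    refine ih.step (fun k hk => ?_) (fun k hk => ?_)
    · simp only [← pPoly_mid]
      exact pPoly_asc n k hk _ _ hT
    · exact pPoly_desc n k hk _ _ (by simp only [Finset.mem_Icc]; omega) hT

theorem statement19 (n : ℕ) (hn : 2 ≤ n) (T : Finset ℕ)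
    (hT : T = Finset.Icc 1 n ∨ T = Finset.Icc 1 (n - 1)) :
    InterlacingSeq (fun k : Fin (n + 1) => pPoly n k ∅ (T.erase 1)) ∧
    InterlacingSeq (fun k : Fin (n + 1) => pPoly n k ∅ T) ∧
    InterlacingSeq (fun k : Fin (n + 1) => pPoly n k {1} T) ∧
    (∀ k ≤ n,
      Interlaces (pPoly n k ∅ (T.erase 1)) (pPoly n k ∅ T) ∧
      Interlaces (pPoly n k ∅ T) (pPoly n k {1} T) ∧
      Interlaces (pPoly n k ∅ (T.erase 1)) (pPoly n k {1} T)) ∧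
    Interlaces (pPoly n (n - 1) ∅ (T.erase 1)) (pPoly n 1 {1} T) ∧
    InterlacingSeq (fun i : Fin (2 * n) =>
      if (i : ℕ) < n then pPoly n i ∅ (T.erase 1)
      else pPoly n ((i : ℕ) - n + 1) {1} T) := by
  obtain ⟨e, he1, rfl⟩ : ∃ e, e ≤ 1 ∧ T = Finset.Icc 1 (n - e) := by
    rcases hT with rfl | rfl
    exacts [⟨0, by omega, rfl⟩, ⟨1, by omega, rfl⟩]
  have H := inv_main e n (by omega) he1
  set T := Finset.Icc 1 (n - e) with hTdef
  have aa : ∀ i j, i ≤ j → j ≤ n →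
      Interlaces (pPoly n i ∅ (T.erase 1)) (pPoly n j ∅ (T.erase 1)) := fun i j h1 h2 =>
    interlaces_of_RI (H.sa i (by omega)) (H.sa j h2) (pPoly_nonneg _ _ _ _) (pPoly_nonneg _ _ _ _)
      (H.aa i j h1 h2)
  have bb : ∀ i j, i ≤ j → j ≤ n →
      Interlaces (pPoly n i {1} T) (pPoly n j {1} T) := fun i j h1 h2 =>
    interlaces_of_RI (H.sb i (by omega)) (H.sb j h2) (pPoly_nonneg _ _ _ _) (pPoly_nonneg _ _ _ _)
      (H.bb i j h1 h2)
  have ab : ∀ i j, i ≤ n → j ≤ n →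
      Interlaces (pPoly n i ∅ (T.erase 1)) (pPoly n j {1} T) := fun i j h1 h2 =>
    interlaces_of_RI (H.sa i h1) (H.sb j h2) (pPoly_nonneg _ _ _ _) (pPoly_nonneg _ _ _ _)
      (H.ab i j h1 h2)
  have sm : ∀ i ≤ n, StableP (pPoly n i ∅ T) := fun i hi => by
    rw [pPoly_mid]; exact H.sm i hi
  have mm : ∀ i j, i ≤ j → j ≤ n →
      Interlaces (pPoly n i ∅ T) (pPoly n j ∅ T) := fun i j h1 h2 =>
    interlaces_of_RI (sm i (by omega)) (sm j h2) (pPoly_nonneg _ _ _ _) (pPoly_nonneg _ _ _ _)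
      (by rw [pPoly_mid n i, pPoly_mid n j]; exact H.mm i j h1 h2)
  refine ⟨fun i j hij => aa i j (le_of_lt hij) (by omega),
    fun i j hij => mm i j (le_of_lt hij) (by omega),
    fun i j hij => bb i j (le_of_lt hij) (by omega), fun k hk => ⟨?_, ?_, ab k k hk hk⟩,
    ab _ _ (by omega) (by omega), fun i j hij => ?_⟩
  · refine interlaces_of_RI (H.sa k hk) (sm k hk) (pPoly_nonneg _ _ _ _) (pPoly_nonneg _ _ _ _) ?_
    rw [pPoly_mid n k T]
    exact (RI.refl _).add_right (H.ab k k hk hk)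
  · refine interlaces_of_RI (sm k hk) (H.sb k hk) (pPoly_nonneg _ _ _ _) (pPoly_nonneg _ _ _ _) ?_
    rw [pPoly_mid n k T]
    exact (H.ab k k hk hk).add_left (RI.refl _)
  · have hi := i.2
    have hj := j.2
    have hij' : (i : ℕ) < j := hij
    simp only
    split_ifs with h1 h2 h2
    · exact aa _ _ (by omega) (by omega)
    · exact ab _ _ (by omega) (by omega)
    · omega
    · exact bb _ _ (by omega) (by omega)
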